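/- arXiv:math/0505242 — 2 statements merged into one kernel-verified Lean document; each statement's English description precedes it below -/
import Mathlib

section
/- Let R be a commutative ring, E an R-module and A = End_R(E). If I is a right ideal of A which is a direct summand of A as a right A-module, then Φ(I) is a direct summand of E and Ψ(Φ(I)) = I; that is, I consists exactly of those endomorphisms of E whose range is contained in the R-submodule of E generated by the ranges of the elements of I. -/
/-- `Ψ(N) = {f ∈ End_R(E) : range f ⊆ N}`, as an `R`-submodule of `End_R(E)`. -/
def psi {R E : Type*} [CommRing R] [AddCommGroup E] [Module R E]
    (N : Submodule R E) : Submodule R (Module.End R E) where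
  carrier := {f | LinearMap.range f ≤ N}
  add_mem' := by
    intro f g hf hg x hx
    obtain ⟨y, rfl⟩ := LinearMap.mem_range.mp hx
    show f y + g y ∈ N
    exact N.add_mem (hf (LinearMap.mem_range_self f y)) (hg (LinearMap.mem_range_self g y))
  zero_mem' := by
    intro x hx
    obtain ⟨y, rfl⟩ := LinearMap.mem_range.mp hx
    exact N.zero_mem
  smul_mem' := by
    intro c f hf x hx
    obtain ⟨y, rfl⟩ := LinearMap.mem_range.mp hx
    show c • f y ∈ N
    exact N.smul_mem c (hf (LinearMap.mem_range_self f y))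

/-- `Φ(I)`: the `R`-submodule of `E` generated by the union of the ranges of all `f ∈ I`. -/
def phi {R E : Type*} [CommRing R] [AddCommGroup E] [Module R E]
    (I : Submodule R (Module.End R E)) : Submodule R E :=
  Submodule.span R (⋃ f ∈ I, (LinearMap.range f : Set E))

/-- A right ideal of `End_R(E)`: an `R`-submodule closed under composition on the right. -/
def IsRightIdeal {R E : Type*} [CommRing R] [AddCommGroup E] [Module R E]
    (I : Submodule R (Module.End R E)) : Prop :=
  ∀ f ∈ I, ∀ g : Module.End R E, f * g ∈ I

/-- A submodule `N` of a module `M` is a direct summand. -/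
def IsSummand {R M : Type*} [CommRing R] [AddCommGroup M] [Module R M]
    (N : Submodule R M) : Prop :=
  ∃ N' : Submodule R M, N ⊓ N' = ⊥ ∧ N ⊔ N' = ⊤

/-- A right ideal `I` of `End_R(E)` is a direct summand of `End_R(E)` as a right module
over itself: there is a right ideal `J` with `I ∩ J = 0` and `I + J = End_R(E)`. -/
def IsIdealSummand {R E : Type*} [CommRing R] [AddCommGroup E] [Module R E]
    (I : Submodule R (Module.End R E)) : Prop :=
  ∃ J : Submodule R (Module.End R E), IsRightIdeal J ∧ I ⊓ J = ⊥ ∧ I ⊔ J = ⊤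

/-! Splitting `1 = p + q` along `A = I ⊕ J` gives an idempotent `p` with
`I = {f | p * f = f} = Ψ(range p)`. Hence `Φ(I) = range p`, which is complemented by `ker p`, and
`Ψ(Φ(I)) = Ψ(range p) = I`. -/

theorem exists_isIdempotentElem_forall_mem_iff_mul_eq {S A : Type*} [Ring S]
    [NonAssocRing A] [Module S A] {I J : Submodule S A} (hI : ∀ f ∈ I, ∀ g, f * g ∈ I)
    (hJ : ∀ f ∈ J, ∀ g, f * g ∈ J) (hIJ : IsCompl I J) :
    ∃ p, IsIdempotentElem p ∧ ∀ f, f ∈ I ↔ p * f = f := by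
  obtain ⟨p, hp, q, hq, hpq⟩ := Submodule.mem_sup.mp (hIJ.sup_eq_top ▸ Submodule.mem_top :
    (1 : A) ∈ I ⊔ J)
  have mul_eq_of_mem : ∀ f ∈ I, p * f = f := fun f hf => by
    have decomp : p * f + q * f = f := by rw [← add_mul, hpq, one_mul]
    have mem_I : q * f ∈ I := (I.add_mem_iff_right (hI p hp f)).mp (by rwa [decomp])
    have eq_zero : q * f = 0 := Submodule.disjoint_def.mp hIJ.disjoint _ mem_I (hJ q hq f)
    rwa [eq_zero, add_zero] at decomp
  exact ⟨p, mul_eq_of_mem p hp, fun f => ⟨mul_eq_of_mem f, fun hf => hf ▸ hI p hp f⟩⟩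

section EndomorphismRing

variable {R E : Type*} [CommRing R] [AddCommGroup E] [Module R E]

theorem gc_phi_psi : GaloisConnection (phi (R := R) (E := E)) psi := fun _ _ =>
  Submodule.span_le.trans Set.iUnion₂_subset_iff

theorem phi_psi_range (p : Module.End R E) : phi (psi (LinearMap.range p)) = LinearMap.range p :=
  le_antisymm (gc_phi_psi.l_u_le _) <|
    gc_phi_psi.le_u_l (psi (LinearMap.range p)) (le_refl (LinearMap.range p))

theorem mem_psi_range_iff_mul_eq {p : Module.End R E} (hp : IsIdempotentElem p)
    {f : Module.End R E} : f ∈ psi (LinearMap.range p) ↔ p * f = f :=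
  (LinearMap.IsIdempotentElem.comp_eq_right_iff hp f).symm

end EndomorphismRing

/-- If `I` is a right ideal of `A = End_R(E)` which is a direct summand of `A` as a right
`A`-module, then `Φ(I)` is a direct summand of `E` and `Ψ(Φ(I)) = I`. -/
theorem phi_of_ideal_summand {R E : Type*} [CommRing R] [AddCommGroup E] [Module R E]
    (I : Submodule R (Module.End R E)) (hI : IsRightIdeal I)
    (hsum : ∃ J : Submodule R (Module.End R E), IsRightIdeal J ∧ I ⊓ J = ⊥ ∧ I ⊔ J = ⊤) :
    (∃ N' : Submodule R E, phi I ⊓ N' = ⊥ ∧ phi I ⊔ N' = ⊤) ∧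
    psi (phi I) = I := by
  obtain ⟨J, hJ, hinf, hsup⟩ := hsum
  obtain ⟨p, hp, mem_iff⟩ := exists_isIdempotentElem_forall_mem_iff_mul_eq hI hJ
    (IsCompl.of_eq hinf hsup)
  obtain rfl : I = psi (LinearMap.range p) :=
    Submodule.ext fun f => (mem_iff f).trans (mem_psi_range_iff_mul_eq hp).symm
  have hcompl : IsCompl (LinearMap.range p) (LinearMap.ker p) :=
    LinearMap.IsIdempotentElem.isCompl hp
  rw [phi_psi_range]
  exact ⟨⟨LinearMap.ker p, hcompl.inf_eq_bot, hcompl.sup_eq_top⟩, rfl⟩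
end

section
/- Let k be a field, V a k-vector space of finite dimension 2n, B a nondegenerate alternating bilinear form on V, and σ the adjoint involution of B. If N is a subspace of V with dim_k N = d, then dim_k (Ψ(N)^⊥) = 2n·(2n − d); that is, the orthogonal I^⊥ of a right ideal I of reduced dimension d is a right ideal of reduced dimension 2n − d. -/
/-- For a bilinear form `B` on `V` and a subspace `N`,
`N^⊥ = {v ∈ V : B(n, v) = 0 for all n ∈ N}`. -/
def subPerp {k V : Type*} [CommRing k] [AddCommGroup V] [Module k V]
    (B : V →ₗ[k] V →ₗ[k] k) (N : Submodule k V) : Submodule k V where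
  carrier := {v | ∀ n ∈ N, B n v = 0}
  add_mem' := by
    intro x y hx hy n hn
    simp [map_add, hx n hn, hy n hn]
  zero_mem' := by
    intro n hn
    simp
  smul_mem' := by
    intro c x hx n hn
    simp [hx n hn]

/-!
The ideal `Ψ(N)` contains the rank-one maps `v ↦ φ v • w` with `w ∈ N`, so `σ x` annihilates it
exactly when `σ x` vanishes on `N`. As `B (x u) w = B u (σ x w)`, this says that `x` takes its
values in the left orthogonal `L` of `N`, hence `Ψ(N)^⊥ = Ψ(L)`. It remains to count dimensions:
`Ψ(L) ≃ Hom(V, L)`, and `L` has dimension `dim V - dim N`.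
-/

section Psi

variable {R E : Type*} [CommRing R] [AddCommGroup E] [Module R E]

theorem mem_psi {N : Submodule R E} {f : Module.End R E} : f ∈ psi N ↔ ∀ v, f v ∈ N :=
  Set.range_subset_iff

theorem isRightIdeal_psi (N : Submodule R E) : IsRightIdeal (psi N) :=
  fun _ hf g => mem_psi.mpr fun v => mem_psi.mp hf (g v)

theorem smulRight_mem_psi {N : Submodule R E} {w : E} (hw : w ∈ N) (φ : E →ₗ[R] R) :
    φ.smulRight w ∈ psi N :=
  mem_psi.mpr fun v => N.smul_mem (φ v) hw

theorem forall_mem_psi_mul_eq_zero_iff [Module.Free R E] {N : Submodule R E}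
    {g : Module.End R E} : (∀ y ∈ psi N, g * y = 0) ↔ N ≤ LinearMap.ker g := by
  refine ⟨fun hg w hw => ?_, fun hN y hy => LinearMap.range_le_ker_iff.mp (le_trans hy hN)⟩
  let b := Module.Free.chooseBasis R E
  rcases isEmpty_or_nonempty (Module.Free.ChooseBasisIndex R E) with _ | ⟨⟨i⟩⟩
  · exact b.ext_elem_iff.mpr isEmptyElim
  · have hrank_one : g * (b.coord i).smulRight w = 0 := hg _ (smulRight_mem_psi hw _)
    simpa using LinearMap.congr_fun hrank_one (b i)

/-- The identification of `Ψ(N)` with `Hom(E, N)` by restricting the codomain; it computes the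
rank of `Ψ(N)`. -/
def psiEquivLinearMap (N : Submodule R E) : psi N ≃ₗ[R] (E →ₗ[R] N) where
  toFun f := f.1.codRestrict N (mem_psi.mp f.2)
  invFun g := ⟨N.subtype ∘ₗ g, mem_psi.mpr fun v => (g v).2⟩
  map_add' _ _ := rfl
  map_smul' _ _ := rfl
  left_inv _ := rfl
  right_inv _ := rfl

theorem finrank_psi [StrongRankCondition R] [Module.Free R E] [Module.Finite R E]
    (N : Submodule R E) [Module.Free R N] [Module.Finite R N] :
    Module.finrank R (psi N) = Module.finrank R E * Module.finrank R N := by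
  rw [(psiEquivLinearMap N).finrank_eq, Module.finrank_linearMap]

end Psi

theorem finrank_subPerp {k V : Type*} [Field k] [AddCommGroup V] [Module k V]
    [FiniteDimensional k V] {B : V →ₗ[k] V →ₗ[k] k} (hB : B.SeparatingLeft)
    (N : Submodule k V) :
    Module.finrank k (subPerp B N) = Module.finrank k V - Module.finrank k N := by
  have hadd : Module.finrank k N + Module.finrank k (subPerp B N) = Module.finrank k V := by
    have h := LinearMap.BilinForm.finrank_add_finrank_orthogonal' (B := B) N
    rwa [LinearMap.separatingLeft_iff_ker_eq_bot.mp hB, inf_bot_eq, finrank_bot, add_zero] at h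
  exact Nat.eq_sub_of_add_eq' hadd

section Adjoint

variable {R E : Type*} [CommRing R] [AddCommGroup E] [Module R E]
  {B : E →ₗ[R] E →ₗ[R] R} {N : Submodule R E} {f g : Module.End R E}

theorem mem_psi_subPerp_flip_iff_le_ker (hB : B.SeparatingRight)
    (hfg : LinearMap.IsAdjointPair B B f g) :
    f ∈ psi (subPerp B.flip N) ↔ N ≤ LinearMap.ker g := by
  rw [mem_psi]
  constructor
  · intro hf w hw
    refine hB (g w) fun u => ?_
    rw [← hfg u w]
    exact hf u w hw
  · intro hN u w hw
    rw [LinearMap.flip_apply, hfg u w, LinearMap.mem_ker.mp (hN hw), map_zero]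

theorem mem_psi_subPerp_flip_iff [Module.Free R E] (hB : B.SeparatingRight)
    (hfg : LinearMap.IsAdjointPair B B f g) :
    f ∈ psi (subPerp B.flip N) ↔ ∀ y ∈ psi N, g * y = 0 := by
  rw [mem_psi_subPerp_flip_iff_le_ker hB hfg, forall_mem_psi_mul_eq_zero_iff]

end Adjoint

theorem finrank_perp_psi_general {k V : Type*} [Field k] [AddCommGroup V] [Module k V]
    [FiniteDimensional k V] {B : V →ₗ[k] V →ₗ[k] k} (hB : B.SeparatingRight)
    {σ : Module.End k V → Module.End k V}
    (hσ : ∀ f : Module.End k V, LinearMap.IsAdjointPair B B f (σ f)) (N : Submodule k V) :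
    ∃ P : Submodule k (Module.End k V),
      (∀ x : Module.End k V, x ∈ P ↔ ∀ y : Module.End k V, y ∈ psi N → σ x * y = 0) ∧
      IsRightIdeal P ∧
      Module.finrank k P =
        Module.finrank k V * (Module.finrank k V - Module.finrank k N) := by
  refine ⟨psi (subPerp B.flip N), fun x => mem_psi_subPerp_flip_iff hB (hσ x),
    isRightIdeal_psi _, ?_⟩
  rw [finrank_psi, finrank_subPerp (LinearMap.flip_separatingLeft.mpr hB)]

/-- Let `V` be a `2n`-dimensional vector space with a nondegenerate alternating bilinear form
`B` with adjoint involution `σ`. If `N` is a subspace of dimension `d`, then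
`Ψ(N)^⊥ = {x : σ(x) ∘ y = 0 for all y ∈ Ψ(N)}` is a right ideal of `End_k(V)` of dimension
`2n·(2n − d)`, i.e. the orthogonal of a right ideal of reduced dimension `d` is a right ideal
of reduced dimension `2n − d`. -/
theorem finrank_perp_psi (k V : Type*) [Field k] [AddCommGroup V] [Module k V]
    [FiniteDimensional k V] (n : ℕ) (hV : Module.finrank k V = 2 * n)
    (B : V →ₗ[k] V →ₗ[k] k)
    (halt : ∀ v : V, B v v = 0)
    (hnd₁ : ∀ u : V, (∀ v : V, B u v = 0) → u = 0)
    (hnd₂ : ∀ v : V, (∀ u : V, B u v = 0) → v = 0)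
    (σ : Module.End k V → Module.End k V)
    (hσ : ∀ (f : Module.End k V) (u v : V), B (f u) v = B u (σ f v))
    (N : Submodule k V) (d : ℕ) (hd : Module.finrank k N = d) :
    ∃ P : Submodule k (Module.End k V),
      (∀ x : Module.End k V, x ∈ P ↔ ∀ y : Module.End k V, y ∈ psi N → σ x * y = 0) ∧
      IsRightIdeal P ∧
      Module.finrank k P = 2 * n * (2 * n - d) := by
  simpa only [hV, hd] using finrank_perp_psi_general hnd₂ hσ N
end
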